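/- Let N be a positive squarefree integer, let P be a non-torsion integral point of E_N(ℚ), and let n ≥ 1 be an integer such that nP is integral. Then |ψ_n(P)| ≤ (2N)^{(n²−1)/2}. -/

import Mathlib

/-- The congruent number curve `E_N : y² = x³ - N²x` over `ℚ`. -/
def congruentCurve (N : ℕ) : WeierstrassCurve.Affine ℚ :=
  { a₁ := 0, a₂ := 0, a₃ := 0, a₄ := -(N : ℚ) ^ 2, a₆ := 0 }

/-- The congruent number curve `E_N : y² = x³ - N²x` over `ℤ`. -/
def congruentCurveZ (N : ℕ) : WeierstrassCurve ℤ :=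
  { a₁ := 0, a₂ := 0, a₃ := 0, a₄ := -(N : ℤ) ^ 2, a₆ := 0 }

/-- The value `ψₙ(P)` of the `n`-th division polynomial of `E_N` at the integral point
`P = (a, b)`. -/
noncomputable def psiEN (N : ℕ) (a b : ℤ) (n : ℤ) : ℤ :=
  ((congruentCurveZ N).Ψ n).evalEval a b

/-- A rational point on a Weierstrass curve over `ℚ` is integral if it is an affine point
whose `x`-coordinate is an integer. -/
def IsIntegralPoint {W : WeierstrassCurve.Affine ℚ} (P : W.Point) : Prop :=
  ∃ (x y : ℚ) (h : W.Nonsingular x y),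
    P = WeierstrassCurve.Affine.Point.some _ _ h ∧ x.den = 1

/-!
Write `N = tM` and `a = ta'` with `t = gcd(a, N)`. If `nP` is integral, then `n` is odd: `x(2Q)` and
`x(2Q) ± N` are squares whenever `2Q ≠ 0`, so an integral `2Q` gives three integral squares in
arithmetic progression with common difference `N`, which forces `4 ∣ N`.

For odd `n` the polynomial `ψₙ` is homogeneous in `x` and `N`, so `ψₙ(P) = t ^ ((n² - 1) / 2) u`
where `u` is the value at `x = a'` of the `n`-th division polynomial of `y² = x³ - M²x`. If an odd
prime `p` divides `u`, then integrality of `nP` and squarefreeness of `t` make `p` divide both the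
numerator and the denominator of `x(nP)`, computed on the twisted model `ty² = x³ - M²x`.
Montgomery's formulas modulo `p` propagate such a common zero down to `n = 1`, against
`gcd(a', M) = 1`. So `u` is a power of `2` up to sign. It is odd unless `a'` and `M` are both
odd, when the recurrence shows that it is `2 ^ ((n² - 1) / 4)` times an odd number.
-/

section

open Polynomial WeierstrassCurve WeierstrassCurve.Affine

section PreNormEDS

variable {R : Type*} [CommRing R]

/-- The weight of the `n`-th term of an auxiliary elliptic divisibility sequence `preNormEDS' b c d`
when `b`, `c`, `d` have weights `3`, `2`, `3`; it is half the degree of the `n`-th univariate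
division polynomial. Both the subtraction and the division truncate: the value is
`(n ^ 2 - 1) / 4` for odd `n` and `(n ^ 2 - 4) / 4` for even `n ≠ 0`. -/
def preNormEDSWeight (n : ℕ) : ℕ := (n ^ 2 - 1) / 4

theorem preNormEDSWeight_two_mul_succ (k : ℕ) :
    preNormEDSWeight (2 * (k + 1)) = k ^ 2 + 2 * k := by
  have : (2 * (k + 1)) ^ 2 = 4 * (k ^ 2 + 2 * k) + 4 := by ring
  rw [preNormEDSWeight]
  lia

theorem preNormEDSWeight_two_mul_add_one (k : ℕ) :
    preNormEDSWeight (2 * k + 1) = k ^ 2 + k := by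
  have : (2 * k + 1) ^ 2 = 4 * (k ^ 2 + k) + 1 := by ring
  rw [preNormEDSWeight]
  lia

theorem natCast_two_mul_preNormEDSWeight (K : Type*) [Field K] [CharZero K] {n : ℕ} (hn : Odd n) :
    ((2 * preNormEDSWeight n : ℕ) : K) = ((n : K) ^ 2 - 1) / 2 := by
  obtain ⟨k, rfl⟩ := hn
  rw [preNormEDSWeight_two_mul_add_one]
  push_cast
  ring

theorem preNormEDS'_weighted_mul (s b c d : R) (n : ℕ) :
    preNormEDS' (s ^ 3 * b) (s ^ 2 * c) (s ^ 3 * d) n =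
      s ^ preNormEDSWeight n * preNormEDS' b c d n := by
  have weight_odd := preNormEDSWeight_two_mul_add_one
  have weight_even := preNormEDSWeight_two_mul_succ
  induction n using normEDSRec with
  | zero | one | two | three | four => simp [preNormEDSWeight]
  | even m h₁ h₂ h₃ h₄ h₅ =>
    rw [preNormEDS'_even, preNormEDS'_even, h₁, h₂, h₃, h₄, h₅, weight_even (m + 2)]
    obtain ⟨j, rfl | rfl⟩ := m.even_or_odd'
    · rw [weight_odd j, show 2 * j + 2 = 2 * (j + 1) from rfl, weight_even j,
        show 2 * j + 3 = 2 * (j + 1) + 1 from rfl, weight_odd (j + 1),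
        show 2 * j + 4 = 2 * (j + 2) from rfl, weight_even (j + 1),
        show 2 * j + 5 = 2 * (j + 2) + 1 from rfl, weight_odd (j + 2)]
      ring
    · rw [show 2 * j + 1 + 1 = 2 * (j + 1) from rfl, weight_even j,
        show 2 * j + 1 + 2 = 2 * (j + 1) + 1 from rfl, weight_odd (j + 1),
        show 2 * j + 1 + 3 = 2 * (j + 2) from rfl, weight_even (j + 1),
        show 2 * j + 1 + 4 = 2 * (j + 2) + 1 from rfl, weight_odd (j + 2),
        show 2 * j + 1 + 5 = 2 * (j + 3) from rfl, weight_even (j + 2)]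
      ring
  | odd m h₁ h₂ h₃ h₄ =>
    rw [preNormEDS'_odd, preNormEDS'_odd, h₁, h₂, h₃, h₄, weight_odd (m + 2)]
    obtain ⟨j, rfl | rfl⟩ := m.even_or_odd'
    · rw [weight_odd j, show 2 * j + 2 = 2 * (j + 1) from rfl, weight_even j,
        show 2 * j + 3 = 2 * (j + 1) + 1 from rfl, weight_odd (j + 1),
        show 2 * j + 4 = 2 * (j + 2) from rfl, weight_even (j + 1)]
      simp only [even_two_mul, if_true]
      ring
    · rw [show 2 * j + 1 + 1 = 2 * (j + 1) from rfl, weight_even j,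
        show 2 * j + 1 + 2 = 2 * (j + 1) + 1 from rfl, weight_odd (j + 1),
        show 2 * j + 1 + 3 = 2 * (j + 2) from rfl, weight_even (j + 1),
        show 2 * j + 1 + 4 = 2 * (j + 2) + 1 from rfl, weight_odd (j + 2)]
      simp only [Nat.not_even_two_mul_add_one, if_false]
      ring

theorem odd_preNormEDS' {b c : ℤ} (d : ℤ) (hb : Even b) (hc : Odd c) {n : ℕ} (hn : Odd n) :
    Odd (preNormEDS' b c d n) := by
  induction n using normEDSRec with
  | zero => simp at hn
  | one => simp
  | two => simp
  | three => simpa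
  | four => exact absurd hn (by decide)
  | even m => exact absurd hn (by simp)
  | odd m h₁ h₂ h₃ h₄ =>
    rw [preNormEDS'_odd]
    rcases m.even_or_odd with hm | hm
    · simp only [if_pos hm, mul_one]
      exact (hb.mul_left _).sub_odd <| (h₁ hm.add_one).mul (h₃ (by grind)).pow
    · simp only [if_neg (Nat.not_even_iff_odd.mpr hm), mul_one]
      exact ((h₄ (by grind)).mul (h₂ (by grind)).pow).sub_even (hb.mul_left _)

end PreNormEDS

section PointFormulas

variable {F : Type*} [Field F] {W : Affine F}

/-- The `x`-coordinate of an affine point, with junk value `1` at the point at infinity. -/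
noncomputable def xCoord (P : W.Point) : F := P.xRep 0

/-- The value `ψₙ(P)` of the `n`-th division polynomial at an affine point `P`, with junk value `0`
at the point at infinity. It is read off the representative `Ψₙ` of `ψₙ` modulo the equation
of the curve. -/
noncomputable def psiAt (n : ℤ) : W.Point → F
  | 0 => 0
  | .some x y _ => (W.Ψ n).evalEval x y

@[simp]
theorem xCoord_some {x y : F} (h : W.Nonsingular x y) : xCoord (.some x y h) = x := rfl

@[simp]
theorem psiAt_some (n : ℤ) {x y : F} (h : W.Nonsingular x y) :
    psiAt n (.some x y h) = (W.Ψ n).evalEval x y := rfl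

theorem psiAt_two_some {x y : F} (h : W.Nonsingular x y) :
    psiAt 2 (.some x y h) = y - W.negY x y := by
  rw [psiAt_some, Ψ_two, ψ₂, evalEval_polynomialY, negY]
  ring

theorem xCoord_eq_iff {P Q : W.Point} (hP : P ≠ 0) (hQ : Q ≠ 0) :
    xCoord P = xCoord Q ↔ P = Q ∨ P = -Q := by
  match P, Q, hP, hQ with
  | .some .., .some .., _, _ => exact Point.X_eq_iff

theorem psiAt_two_sq {P : W.Point} (hP : P ≠ 0) :
    psiAt 2 P ^ 2 = 4 * xCoord P ^ 3 + W.b₂ * xCoord P ^ 2 + 2 * W.b₄ * xCoord P + W.b₆ := by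
  match P, hP with
  | .some x y h, _ =>
    simp only [psiAt_two_some, xCoord_some, negY, b₂, b₄, b₆]
    linear_combination 4 * (equation_iff ..).mp h.1

variable [DecidableEq F]

theorem psiAt_two_ne_zero {P : W.Point} (hP : (2 : ℤ) • P ≠ 0) : psiAt 2 P ≠ 0 := by
  match P, hP with
  | 0, hP => simp at hP
  | .some x y h, hP =>
    contrapose! hP
    rw [psiAt_two_some] at hP
    rw [two_zsmul, Point.add_self_of_Y_eq (sub_eq_zero.mp hP)]

theorem xCoord_two_zsmul {P : W.Point} (hP : (2 : ℤ) • P ≠ 0) :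
    xCoord ((2 : ℤ) • P) * psiAt 2 P ^ 2 =
      xCoord P ^ 4 - W.b₄ * xCoord P ^ 2 - 2 * W.b₆ * xCoord P - W.b₈ := by
  have hψ := psiAt_two_ne_zero hP
  match P, hP, hψ with
  | 0, hP, _ => simp at hP
  | .some x y h, _, hψ =>
    have hy : y - W.negY x y ≠ 0 := psiAt_two_some h ▸ hψ
    rw [two_zsmul, Point.add_self_of_Y_ne (sub_ne_zero.mp hy)]
    simp only [psiAt_two_some, xCoord_some, slope_of_Y_ne rfl (sub_ne_zero.mp hy), addX]
    field_simp
    simp only [negY, b₄, b₆, b₈]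
    have := (equation_iff ..).mp h.1
    grobner

section Distinct

variable {P Q : W.Point} (hP : P ≠ 0) (hQ : Q ≠ 0) (hx : xCoord P ≠ xCoord Q)

include hP hQ hx

theorem xCoord_sub_sub_xCoord_add :
    (xCoord (P - Q) - xCoord (P + Q)) * (xCoord P - xCoord Q) ^ 2 = psiAt 2 P * psiAt 2 Q := by
  match P, Q, hP, hQ, hx with
  | .some x₁ y₁ h₁, .some x₂ y₂ h₂, _, _, hx =>
    simp only [xCoord_some] at hx
    rw [sub_eq_add_neg (Point.some ..), Point.neg_some, Point.add_of_X_ne hx, Point.add_of_X_ne hx]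
    simp only [xCoord_some, psiAt_two_some, addX_eq_addX_negY_sub y₁ y₂ hx]
    field_simp [sub_ne_zero.mpr hx.symm]
    ring

theorem xCoord_add_add_xCoord_sub :
    (xCoord (P + Q) + xCoord (P - Q)) * (xCoord P - xCoord Q) ^ 2 =
      2 * xCoord P * xCoord Q * (xCoord P + xCoord Q) + W.b₂ * xCoord P * xCoord Q +
        W.b₄ * (xCoord P + xCoord Q) + W.b₆ := by
  match P, Q, hP, hQ, hx with
  | .some x₁ y₁ h₁, .some x₂ y₂ h₂, _, _, hx =>
    simp only [xCoord_some] at hx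
    rw [sub_eq_add_neg (Point.some ..), Point.neg_some, Point.add_of_X_ne hx, Point.add_of_X_ne hx]
    simp only [xCoord_some, slope_of_X_ne hx, addX, negY, b₂, b₄, b₆]
    field_simp [sub_ne_zero.mpr hx]
    linear_combination 2 * (equation_iff ..).mp h₁.1 + 2 * (equation_iff ..).mp h₂.1

theorem xCoord_add_mul_xCoord_sub :
    xCoord (P + Q) * xCoord (P - Q) * (xCoord P - xCoord Q) ^ 2 =
      xCoord P ^ 2 * xCoord Q ^ 2 - W.b₄ * xCoord P * xCoord Q -
        W.b₆ * (xCoord P + xCoord Q) - W.b₈ := by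
  match P, Q, hP, hQ, hx with
  | .some x₁ y₁ h₁, .some x₂ y₂ h₂, _, _, hx =>
    simp only [xCoord_some] at hx
    rw [sub_eq_add_neg (Point.some ..), Point.neg_some, Point.add_of_X_ne hx, Point.add_of_X_ne hx]
    simp only [xCoord_some, slope_of_X_ne hx, addX, negY, b₄, b₆, b₈]
    have e₁ := (equation_iff ..).mp h₁.1
    have e₂ := (equation_iff ..).mp h₂.1
    field_simp [sub_ne_zero.mpr hx]
    grobner

theorem xCoord_add_sub_mul_xCoord_sub_sub (h2P : (2 : ℤ) • P ≠ 0) :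
    (xCoord (P + Q) - xCoord P) * (xCoord (P - Q) - xCoord P) * (xCoord P - xCoord Q) ^ 2 =
      psiAt 2 P ^ 2 * (xCoord ((2 : ℤ) • P) - xCoord Q) := by
  linear_combination xCoord_add_mul_xCoord_sub hP hQ hx -
    xCoord P * xCoord_add_add_xCoord_sub hP hQ hx - xCoord_two_zsmul h2P +
    xCoord Q * psiAt_two_sq hP

end Distinct

end PointFormulas

section NotIsOfFinAddOrder

variable {A : Type*} [AddGroup A] {a : A}

theorem ne_zero_of_not_isOfFinAddOrder (ha : ¬IsOfFinAddOrder a) : a ≠ 0 :=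
  fun h ↦ ha (h ▸ .zero)

theorem zsmul_ne_zero_of_not_isOfFinAddOrder (ha : ¬IsOfFinAddOrder a) {n : ℤ} (hn : n ≠ 0) :
    n • a ≠ 0 := by
  rw [← zero_zsmul a]
  exact (injective_zsmul_iff_not_isOfFinAddOrder.mpr ha).ne hn

end NotIsOfFinAddOrder

section DivisionPolynomialValues

variable {F : Type*} [Field F] {W : Affine F} {P : W.Point}

theorem psiAt_zero (P : W.Point) : psiAt 0 P = 0 := by
  match P with
  | 0 => rfl
  | .some x y h => simp

theorem psiAt_one (hP : P ≠ 0) : psiAt 1 P = 1 := by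
  match P, hP with
  | .some x y h, _ => simp

theorem psiAt_three (hP : P ≠ 0) : psiAt 3 P = W.Ψ₃.eval (xCoord P) := by
  match P, hP with
  | .some x y h, _ => simp [evalEval_C]

theorem psiAt_four (hP : P ≠ 0) : psiAt 4 P = W.preΨ₄.eval (xCoord P) * psiAt 2 P := by
  match P, hP with
  | .some x y h, _ => simp [evalEval_C]

theorem psiAt_even (P : W.Point) (m : ℤ) :
    psiAt (2 * m) P * psiAt 2 P =
      psiAt (m - 1) P ^ 2 * psiAt m P * psiAt (m + 2) P -
        psiAt (m - 2) P * psiAt m P * psiAt (m + 1) P ^ 2 := by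
  match P with
  | 0 => simp [psiAt]
  | .some x y h =>
    simpa only [psiAt_some, Ψ_two, evalEval_mul, evalEval_sub, evalEval_pow] using
      congrArg (evalEval x y) (W.Ψ_even m)

theorem psiAt_odd (P : W.Point) (m : ℤ) :
    psiAt (2 * m + 1) P =
      psiAt (m + 2) P * psiAt m P ^ 3 - psiAt (m - 1) P * psiAt (m + 1) P ^ 3 := by
  match P with
  | 0 => simp [psiAt]
  | .some x y h =>
    have h₀ : W.polynomial.evalEval x y = 0 := h.1
    simp only [psiAt_some, Ψ_odd, evalEval_add, evalEval_sub, evalEval_mul, evalEval_pow, h₀,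
      zero_mul, add_zero]

theorem eval_Ψ₂Sq (hP : P ≠ 0) : W.Ψ₂Sq.eval (xCoord P) = psiAt 2 P ^ 2 := by
  rw [psiAt_two_sq hP, Ψ₂Sq]
  simp

theorem eval_ΨSq (hP : P ≠ 0) (n : ℤ) : (W.ΨSq n).eval (xCoord P) = psiAt n P ^ 2 := by
  have h₂ := eval_Ψ₂Sq hP
  match P, hP with
  | .some x y h, _ =>
    simp only [psiAt_some, xCoord_some, Ψ_two] at h₂ ⊢
    rw [ΨSq, WeierstrassCurve.Ψ]
    split_ifs <;> simp [evalEval_C, h₂, mul_pow]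

theorem eval_Φ (hP : P ≠ 0) (n : ℤ) :
    (W.Φ n).eval (xCoord P) =
      xCoord P * psiAt n P ^ 2 - psiAt (n + 1) P * psiAt (n - 1) P := by
  have h₂ := eval_Ψ₂Sq hP
  rw [← eval_ΨSq hP]
  match P, hP with
  | .some x y h, _ =>
    simp only [psiAt_some, xCoord_some, Ψ_two] at h₂ ⊢
    rw [WeierstrassCurve.Φ, WeierstrassCurve.Ψ, WeierstrassCurve.Ψ]
    by_cases hn : Even n
    · simp [hn, Int.not_odd_iff_even.mpr hn, evalEval_C]
    · simp only [hn, Int.not_even_iff_odd.mp hn, Odd.add_one, even_sub_one, if_true, if_false,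
        eval_sub, eval_mul, eval_X, h₂, evalEval_mul, evalEval_C]
      ring

variable [DecidableEq F]

/-- The relation `ψ_{n+1} ψ_{n-1} = ψ_n² (x(P) - x(nP))` between the values of the division
polynomials at `P`; it says that `x(nP) = φ_n(P) / ψ_n(P)²`. -/
def PsiStep (P : W.Point) (n : ℤ) : Prop :=
  psiAt (n + 1) P * psiAt (n - 1) P = psiAt n P ^ 2 * (xCoord P - xCoord (n • P))

theorem PsiStep.psiAt_two_mul_add_one {m : ℤ} (hm : PsiStep P m) (hm' : PsiStep P (m + 1)) :
    psiAt (2 * m + 1) P =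
      psiAt m P ^ 2 * psiAt (m + 1) P ^ 2 * (xCoord (m • P) - xCoord ((m + 1) • P)) := by
  rw [PsiStep, add_assoc, add_sub_cancel_right, one_add_one_eq_two] at hm'
  rw [PsiStep] at hm
  linear_combination psiAt_odd P m + psiAt m P ^ 2 * hm' - psiAt (m + 1) P ^ 2 * hm

theorem psiStep_one (P : W.Point) : PsiStep P 1 := by
  simp [PsiStep, psiAt_zero]

theorem psiStep_two (hP : P ≠ 0) (h2P : (2 : ℤ) • P ≠ 0) : PsiStep P 2 := by
  have hψ₃ := psiAt_three hP
  simp only [Ψ₃, eval_add, eval_mul, eval_pow, eval_C, eval_X, eval_ofNat] at hψ₃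
  rw [PsiStep, show (2 : ℤ) + 1 = 3 from rfl, show (2 : ℤ) - 1 = 1 from rfl, psiAt_one hP]
  linear_combination hψ₃ + xCoord_two_zsmul h2P - xCoord P * psiAt_two_sq hP

section InfiniteOrder

variable (hP : ¬IsOfFinAddOrder P)

include hP

theorem xCoord_zsmul_ne {m n : ℤ} (hm : 0 < m) (hn : 0 < n) (hmn : m ≠ n) :
    xCoord (m • P) ≠ xCoord (n • P) := by
  have inj := injective_zsmul_iff_not_isOfFinAddOrder.mpr hP
  have ne_zero {n : ℤ} (hn : 0 < n) := zsmul_ne_zero_of_not_isOfFinAddOrder hP hn.ne'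
  rw [Ne, xCoord_eq_iff (ne_zero hm) (ne_zero hn), ← neg_zsmul, inj.eq_iff, inj.eq_iff]
  lia

theorem psiAt_two_zsmul_ne_zero {m : ℤ} (hm : m ≠ 0) : psiAt 2 (m • P) ≠ 0 := by
  refine psiAt_two_ne_zero ?_
  rw [← mul_zsmul]
  exact zsmul_ne_zero_of_not_isOfFinAddOrder hP (by lia)

theorem psiStep_three : PsiStep P 3 := by
  have hP₁ : P ≠ 0 := ne_zero_of_not_isOfFinAddOrder hP
  have hP₂ : (2 : ℤ) • P ≠ 0 := zsmul_ne_zero_of_not_isOfFinAddOrder hP two_ne_zero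
  have hx : xCoord ((2 : ℤ) • P) ≠ xCoord P := by
    simpa using xCoord_zsmul_ne hP two_pos one_pos (by decide)
  have hsum := xCoord_add_add_xCoord_sub hP₂ hP₁ hx
  rw [show (2 : ℤ) • P + P = (3 : ℤ) • P by abel, show (2 : ℤ) • P - P = P by abel] at hsum
  have h₃ : psiAt 3 P = psiAt 2 P ^ 2 * (xCoord P - xCoord ((2 : ℤ) • P)) := by
    simpa [PsiStep, psiAt_one hP₁] using psiStep_two hP₁ hP₂
  have hψ₄ : psiAt 4 P =
      psiAt 2 P ^ 3 * (xCoord P - xCoord ((2 : ℤ) • P)) ^ 2 *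
        (xCoord P - xCoord ((3 : ℤ) • P)) := by
    rw [psiAt_four hP₁]
    simp only [preΨ₄, eval_add, eval_mul, eval_pow, eval_C, eval_X, eval_ofNat]
    linear_combination psiAt 2 P ^ 3 * hsum +
      psiAt 2 P * (6 * xCoord P ^ 2 + W.b₂ * xCoord P + W.b₄) * xCoord_two_zsmul hP₂ -
      psiAt 2 P * (2 * xCoord P ^ 3 - W.b₄ * xCoord P - W.b₆) * psiAt_two_sq hP₁ +
      psiAt 2 P * xCoord P ^ 2 * W.b_relation
  rw [PsiStep, show (3 : ℤ) + 1 = 4 from rfl, show (3 : ℤ) - 1 = 2 from rfl, hψ₄, h₃]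
  ring

variable {m : ℤ}

theorem PsiStep.psiAt_two_mul (hm : 1 < m) (h₁ : PsiStep P (m - 1)) (h₂ : PsiStep P m)
    (h₃ : PsiStep P (m + 1)) : psiAt (2 * m) P = psiAt m P ^ 4 * psiAt 2 (m • P) := by
  have hP₁ : P ≠ 0 := ne_zero_of_not_isOfFinAddOrder hP
  have hψ : psiAt 2 P ≠ 0 := by simpa using psiAt_two_zsmul_ne_zero hP one_ne_zero
  have hx : xCoord (m • P) ≠ xCoord P := by
    simpa using xCoord_zsmul_ne hP (by lia) one_pos hm.ne'
  have hdiff := xCoord_sub_sub_xCoord_add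
    (zsmul_ne_zero_of_not_isOfFinAddOrder hP (by lia)) hP₁ hx
  rw [sub_eq_add_neg (m • P), ← sub_one_zsmul, ← add_one_zsmul] at hdiff
  rw [PsiStep, sub_add_cancel, sub_sub, one_add_one_eq_two] at h₁
  rw [PsiStep, add_assoc, add_sub_cancel_right, one_add_one_eq_two] at h₃
  rw [PsiStep] at h₂
  refine mul_right_cancel₀ hψ ?_
  calc psiAt (2 * m) P * psiAt 2 P
      = (psiAt (m + 1) P * psiAt (m - 1) P) ^ 2 *
          (xCoord ((m - 1) • P) - xCoord ((m + 1) • P)) := by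
        linear_combination psiAt_even P m + psiAt (m - 1) P ^ 2 * h₃ - psiAt (m + 1) P ^ 2 * h₁
    _ = psiAt m P ^ 4 * psiAt 2 (m • P) * psiAt 2 P := by
        rw [h₂]
        linear_combination psiAt m P ^ 4 * hdiff

theorem PsiStep.two_mul (hm : 1 < m) (h₁ : PsiStep P (m - 1)) (h₂ : PsiStep P m)
    (h₃ : PsiStep P (m + 1)) : PsiStep P (2 * m) := by
  have hP₁ : P ≠ 0 := ne_zero_of_not_isOfFinAddOrder hP
  have hx : xCoord (m • P) ≠ xCoord P := by
    simpa using xCoord_zsmul_ne hP (by lia) one_pos hm.ne'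
  have hprod := xCoord_add_sub_mul_xCoord_sub_sub
    (zsmul_ne_zero_of_not_isOfFinAddOrder hP (by lia)) hP₁ hx
    (by rw [← mul_zsmul]; exact zsmul_ne_zero_of_not_isOfFinAddOrder hP (by lia))
  rw [sub_eq_add_neg (m • P), ← sub_one_zsmul, ← add_one_zsmul, ← mul_zsmul] at hprod
  have hodd := h₂.psiAt_two_mul_add_one h₃
  have hodd' := h₁.psiAt_two_mul_add_one (by rwa [sub_add_cancel])
  rw [show 2 * (m - 1) + 1 = 2 * m - 1 by ring, sub_add_cancel] at hodd'
  rw [PsiStep, hodd, hodd', h₁.psiAt_two_mul hP hm h₂ h₃]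
  rw [PsiStep] at h₂
  linear_combination psiAt m P ^ 4 * (xCoord (m • P) - xCoord ((m + 1) • P)) *
    (xCoord ((m - 1) • P) - xCoord (m • P)) *
    (psiAt (m + 1) P * psiAt (m - 1) P + psiAt m P ^ 2 * (xCoord P - xCoord (m • P))) * h₂ -
    psiAt m P ^ 8 * hprod

theorem PsiStep.two_mul_add_one (hm : 1 < m) (h₁ : PsiStep P (m - 1)) (h₂ : PsiStep P m)
    (h₃ : PsiStep P (m + 1)) (h₄ : PsiStep P (m + 2)) : PsiStep P (2 * m + 1) := by
  have hx : xCoord ((m + 1) • P) ≠ xCoord (m • P) := xCoord_zsmul_ne hP (by lia) (by lia) (by lia)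
  have hdiff := xCoord_sub_sub_xCoord_add
    (zsmul_ne_zero_of_not_isOfFinAddOrder hP (by lia))
    (zsmul_ne_zero_of_not_isOfFinAddOrder hP (by lia)) hx
  rw [← sub_smul, ← add_smul, add_sub_cancel_left, one_zsmul,
    show m + 1 + m = 2 * m + 1 by ring] at hdiff
  have heven := h₁.psiAt_two_mul hP hm h₂ h₃
  have heven' := PsiStep.psiAt_two_mul hP (show 1 < m + 1 by lia) (by rwa [add_sub_cancel_right]) h₃
    (by rwa [add_assoc, one_add_one_eq_two])
  rw [show 2 * (m + 1) = 2 * m + 1 + 1 by ring] at heven'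
  rw [PsiStep, add_sub_cancel_right, heven, heven', h₂.psiAt_two_mul_add_one h₃]
  linear_combination -(psiAt m P ^ 4 * psiAt (m + 1) P ^ 4) * hdiff

theorem psiStep_of_pos {n : ℤ} (hn : 0 < n) : PsiStep P n := by
  lift n to ℕ using hn.le
  induction n using Nat.strong_induction_on with
  | _ n ih =>
    have step {k : ℤ} (hk : 0 < k) (hkn : k < n) : PsiStep P k := by
      lift k to ℕ using hk.le
      exact ih k (by lia) hk
    obtain ⟨m, hm | hm⟩ := (n : ℤ).even_or_odd'
    · obtain rfl | hm₁ : m = 1 ∨ 1 < m := by lia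
      · rw [hm]
        exact psiStep_two (ne_zero_of_not_isOfFinAddOrder hP)
          (zsmul_ne_zero_of_not_isOfFinAddOrder hP two_ne_zero)
      · rw [hm]
        exact .two_mul hP hm₁ (step (by lia) (by lia)) (step (by lia) (by lia))
          (step (by lia) (by lia))
    · obtain rfl | rfl | hm₁ : m = 0 ∨ m = 1 ∨ 1 < m := by lia
      · rw [hm]
        exact psiStep_one P
      · rw [hm]
        exact psiStep_three hP
      · rw [hm]
        exact .two_mul_add_one hP hm₁ (step (by lia) (by lia)) (step (by lia) (by lia))
          (step (by lia) (by lia)) (step (by lia) (by lia))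

theorem psiAt_two_mul_of_pos {n : ℤ} (hn : 0 < n) :
    psiAt (2 * n) P = psiAt n P ^ 4 * psiAt 2 (n • P) := by
  obtain rfl | hn₁ : n = 1 ∨ 1 < n := by lia
  · simp [psiAt_one (ne_zero_of_not_isOfFinAddOrder hP)]
  · exact (psiStep_of_pos hP (by lia)).psiAt_two_mul hP hn₁ (psiStep_of_pos hP hn)
      (psiStep_of_pos hP (by lia))

theorem psiAt_two_mul_add_one_of_pos {n : ℤ} (hn : 0 < n) :
    psiAt (2 * n + 1) P =
      psiAt n P ^ 2 * psiAt (n + 1) P ^ 2 * (xCoord (n • P) - xCoord ((n + 1) • P)) :=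
  (psiStep_of_pos hP hn).psiAt_two_mul_add_one (psiStep_of_pos hP (by lia))

theorem eval_Φ_eq_xCoord_zsmul_mul {n : ℤ} (hn : 0 < n) :
    (W.Φ n).eval (xCoord P) = xCoord (n • P) * (W.ΨSq n).eval (xCoord P) := by
  have hP₁ : P ≠ 0 := ne_zero_of_not_isOfFinAddOrder hP
  rw [eval_Φ hP₁, eval_ΨSq hP₁]
  have hstep := psiStep_of_pos hP hn
  rw [PsiStep] at hstep
  linear_combination -hstep

end InfiniteOrder

end DivisionPolynomialValues

section MontgomeryLadder

variable {R S : Type*} [CommRing R] [CommRing S] {M x : R} {A B : ℕ → R}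

/-- The numerators `A n` and denominators `B n` of `x(nP)` for a point `P` with `x(P) = x` on
`y² = x³ - M²x`, as computed by Montgomery's doubling and differential addition formulas. -/
structure IsMontgomeryLadder (M x : R) (A B : ℕ → R) : Prop where
  num_one : A 1 = x
  den_one : B 1 = 1
  num_two_mul {n : ℕ} (hn : 0 < n) : A (2 * n) = (A n ^ 2 + M ^ 2 * B n ^ 2) ^ 2
  den_two_mul {n : ℕ} (hn : 0 < n) :
    B (2 * n) = 4 * A n * B n * (A n ^ 2 - M ^ 2 * B n ^ 2)
  mul_num_two_mul_add_one {n : ℕ} (hn : 0 < n) :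
    x * A (2 * n + 1) = (A n * A (n + 1) + M ^ 2 * B n * B (n + 1)) ^ 2
  den_two_mul_add_one {n : ℕ} (hn : 0 < n) :
    B (2 * n + 1) = (A n * B (n + 1) - A (n + 1) * B n) ^ 2
  num_add_mul_den_two_mul_add_one {n : ℕ} (hn : 0 < n) :
    A (2 * n + 1) + x * B (2 * n + 1) =
      2 * (A n * B (n + 1) + A (n + 1) * B n) *
        (A n * A (n + 1) - M ^ 2 * B n * B (n + 1))

namespace IsMontgomeryLadder

theorem map (f : R →+* S) (L : IsMontgomeryLadder M x A B) :
    IsMontgomeryLadder (f M) (f x) (fun n ↦ f (A n)) (fun n ↦ f (B n)) where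
  num_one := congrArg f L.num_one
  den_one := by rw [L.den_one, map_one]
  num_two_mul hn := by simpa using congrArg f (L.num_two_mul hn)
  den_two_mul hn := by simpa [map_ofNat f] using congrArg f (L.den_two_mul hn)
  mul_num_two_mul_add_one hn := by simpa using congrArg f (L.mul_num_two_mul_add_one hn)
  den_two_mul_add_one hn := by simpa using congrArg f (L.den_two_mul_add_one hn)
  num_add_mul_den_two_mul_add_one hn := by
    simpa [map_ofNat f] using congrArg f (L.num_add_mul_den_two_mul_add_one hn)

theorem of_map {f : R →+* S} (hf : Function.Injective f)
    (L : IsMontgomeryLadder (f M) (f x) (fun n ↦ f (A n)) (fun n ↦ f (B n))) :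
    IsMontgomeryLadder M x A B where
  num_one := hf L.num_one
  den_one := hf (by simpa using L.den_one)
  num_two_mul hn := hf (by simpa using L.num_two_mul hn)
  den_two_mul hn := hf (by simpa [map_ofNat f] using L.den_two_mul hn)
  mul_num_two_mul_add_one hn := hf (by simpa using L.mul_num_two_mul_add_one hn)
  den_two_mul_add_one hn := hf (by simpa using L.den_two_mul_add_one hn)
  num_add_mul_den_two_mul_add_one hn :=
    hf (by simpa [map_ofNat f] using L.num_add_mul_den_two_mul_add_one hn)

variable [IsDomain R]

theorem of_twist {t : R} (ht : t ≠ 0) {A' B' : ℕ → R}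
    (hA : ∀ n, A' n = t ^ n ^ 2 * A n) (hB : ∀ n, t * B' n = t ^ n ^ 2 * B n)
    (L : IsMontgomeryLadder (t * M) (t * x) A' B') : IsMontgomeryLadder M x A B where
  num_one := mul_left_cancel₀ ht (by simpa [L.num_one] using (hA 1).symm)
  den_one := mul_left_cancel₀ ht (by simpa [L.den_one] using (hB 1).symm)
  num_two_mul {n} hn := by
    refine mul_left_cancel₀ (pow_ne_zero ((2 * n) ^ 2) ht) ?_
    calc t ^ (2 * n) ^ 2 * A (2 * n) = (A' n ^ 2 + M ^ 2 * (t * B' n) ^ 2) ^ 2 := by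
          rw [← hA, L.num_two_mul hn]
          ring
      _ = t ^ (2 * n) ^ 2 * (A n ^ 2 + M ^ 2 * B n ^ 2) ^ 2 := by
          rw [hA, hB]
          ring
  den_two_mul {n} hn := by
    refine mul_left_cancel₀ (pow_ne_zero ((2 * n) ^ 2) ht) ?_
    calc t ^ (2 * n) ^ 2 * B (2 * n) =
          4 * A' n * (t * B' n) * (A' n ^ 2 - M ^ 2 * (t * B' n) ^ 2) := by
          rw [← hB, L.den_two_mul hn]
          ring
      _ = t ^ (2 * n) ^ 2 * (4 * A n * B n * (A n ^ 2 - M ^ 2 * B n ^ 2)) := by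
          rw [hA, hB]
          ring
  mul_num_two_mul_add_one {n} hn := by
    refine mul_left_cancel₀ (pow_ne_zero ((2 * n + 1) ^ 2 + 1) ht) ?_
    calc t ^ ((2 * n + 1) ^ 2 + 1) * (x * A (2 * n + 1)) =
          (A' n * A' (n + 1) + M ^ 2 * (t * B' n) * (t * B' (n + 1))) ^ 2 := by
          linear_combination L.mul_num_two_mul_add_one hn - t * x * hA (2 * n + 1)
      _ = t ^ ((2 * n + 1) ^ 2 + 1) * (A n * A (n + 1) + M ^ 2 * B n * B (n + 1)) ^ 2 := by
          rw [hA, hA, hB, hB]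
          ring
  den_two_mul_add_one {n} hn := by
    refine mul_left_cancel₀ (pow_ne_zero ((2 * n + 1) ^ 2 + 1) ht) ?_
    calc t ^ ((2 * n + 1) ^ 2 + 1) * B (2 * n + 1) =
          (A' n * (t * B' (n + 1)) - A' (n + 1) * (t * B' n)) ^ 2 := by
          linear_combination t ^ 2 * L.den_two_mul_add_one hn - t * hB (2 * n + 1)
      _ = t ^ ((2 * n + 1) ^ 2 + 1) * (A n * B (n + 1) - A (n + 1) * B n) ^ 2 := by
          rw [hA, hA, hB, hB]
          ring
  num_add_mul_den_two_mul_add_one {n} hn := by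
    refine mul_left_cancel₀ (pow_ne_zero ((2 * n + 1) ^ 2 + 1) ht) ?_
    calc t ^ ((2 * n + 1) ^ 2 + 1) * (A (2 * n + 1) + x * B (2 * n + 1)) =
          2 * (A' n * (t * B' (n + 1)) + A' (n + 1) * (t * B' n)) *
            (A' n * A' (n + 1) - M ^ 2 * (t * B' n) * (t * B' (n + 1))) := by
          linear_combination t * L.num_add_mul_den_two_mul_add_one hn - t * hA (2 * n + 1) -
            t * x * hB (2 * n + 1)
      _ = t ^ ((2 * n + 1) ^ 2 + 1) * (2 * (A n * B (n + 1) + A (n + 1) * B n) *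
            (A n * A (n + 1) - M ^ 2 * B n * B (n + 1))) := by
          rw [hA, hA, hB, hB]
          ring

theorem num_ne_zero_or_mul_den_ne_zero (L : IsMontgomeryLadder M x A B) (h2 : (2 : R) ≠ 0)
    (hx : x ≠ 0 ∨ M ≠ 0) {n : ℕ} (hn : 0 < n) : A n ≠ 0 ∨ M * B n ≠ 0 := by
  have eq_zero_of_two_pow_mul {k : ℕ} {y : R} (h : 2 ^ k * y = 0) : y = 0 :=
    (mul_eq_zero.mp h).resolve_left (pow_ne_zero k h2)
  induction n using Nat.strong_induction_on with
  | _ n ih =>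
  by_contra! ⟨hA, hB⟩
  obtain ⟨m, rfl | rfl⟩ := n.even_or_odd'
  · have hm : 0 < m := by lia
    have ihm := ih m (by lia) hm
    have hsum : A m ^ 2 + (M * B m) ^ 2 = 0 := by
      rw [mul_pow, ← pow_eq_zero_iff two_ne_zero, ← L.num_two_mul hm, hA]
    have hprod : A m * (M * B m) ^ 3 = 0 := by
      rw [L.den_two_mul hm] at hB
      apply eq_zero_of_two_pow_mul (k := 3)
      linear_combination 4 * A m * (M * B m) * hsum - hB
    generalize M * B m = b at *
    rcases mul_eq_zero.mp hprod with h | h <;> simp_all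
  · obtain rfl | hm := m.eq_zero_or_pos
    · simp_all [L.num_one, L.den_one]
    have ihm := ih m (by lia) hm
    have ihm' := ih (m + 1) (by lia) m.succ_pos
    have hadd : A m * A (m + 1) + (M * B m) * (M * B (m + 1)) = 0 := by
      rw [← pow_eq_zero_iff two_ne_zero]
      linear_combination x * hA - L.mul_num_two_mul_add_one hm
    have hsub : A m * (M * B (m + 1)) - A (m + 1) * (M * B m) = 0 := by
      rw [← pow_eq_zero_iff two_ne_zero]
      linear_combination M * hB - M ^ 2 * L.den_two_mul_add_one hm
    have hprod : A m * (M * B (m + 1)) * (A m * A (m + 1)) = 0 := by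
      apply eq_zero_of_two_pow_mul (k := 3)
      linear_combination -M * L.num_add_mul_den_two_mul_add_one hm + M * hA + x * hB +
        (2 * A m * (M * B (m + 1)) + 2 * A (m + 1) * (M * B m)) * hadd +
        4 * A m * A (m + 1) * hsub
    generalize M * B m = b at *
    generalize M * B (m + 1) = b' at *
    have hsum : A m ^ 2 + b ^ 2 = 0 := by
      rcases ihm' with hA' | hb'
      · refine (mul_eq_zero.mp ?_).resolve_left hA'
        linear_combination A m * hadd - b * hsub
      · refine (mul_eq_zero.mp ?_).resolve_left hb'
        linear_combination A m * hsub + b * hadd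
    simp only [mul_eq_zero] at hprod
    rcases hprod with (h | h) | (h | h) <;> simp_all

end IsMontgomeryLadder

end MontgomeryLadder

section CongruentCurve

variable {R : Type*} [CommRing R] {M : R} {W : WeierstrassCurve R}

/-- The Weierstrass curve `W` is `y² = x³ - M²x`. This covers the curves `E_N` over `ℚ` and over `ℤ`
alike. -/
structure IsCongruentCurve (M : R) (W : WeierstrassCurve R) : Prop where
  a₁ : W.a₁ = 0
  a₂ : W.a₂ = 0
  a₃ : W.a₃ = 0
  a₄ : W.a₄ = -M ^ 2
  a₆ : W.a₆ = 0

theorem isCongruentCurve_congruentCurve (N : ℕ) : IsCongruentCurve (N : ℚ) (congruentCurve N) :=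
  ⟨rfl, rfl, rfl, rfl, rfl⟩

theorem isCongruentCurve_congruentCurveZ (N : ℕ) : IsCongruentCurve (N : ℤ) (congruentCurveZ N) :=
  ⟨rfl, rfl, rfl, rfl, rfl⟩

theorem map_congruentCurveZ (N : ℕ) :
    (congruentCurveZ N).map (Int.castRingHom ℚ) = congruentCurve N := by
  simp [congruentCurveZ, congruentCurve, WeierstrassCurve.map]

namespace IsCongruentCurve

theorem neg (hW : IsCongruentCurve M W) : IsCongruentCurve (-M) W where
  __ := hW
  a₄ := by rw [hW.a₄, neg_sq]

theorem b₂ (hW : IsCongruentCurve M W) : W.b₂ = 0 := by simp [WeierstrassCurve.b₂, hW.a₁, hW.a₂]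

theorem b₄ (hW : IsCongruentCurve M W) : W.b₄ = -2 * M ^ 2 := by
  simp [WeierstrassCurve.b₄, hW.a₁, hW.a₄]

theorem b₆ (hW : IsCongruentCurve M W) : W.b₆ = 0 := by simp [WeierstrassCurve.b₆, hW.a₃, hW.a₆]

theorem b₈ (hW : IsCongruentCurve M W) : W.b₈ = -M ^ 4 := by
  rw [WeierstrassCurve.b₈, hW.a₁, hW.a₂, hW.a₃, hW.a₄, hW.a₆]
  ring

end IsCongruentCurve

end CongruentCurve

section CongruentCurvePoints

variable {F : Type*} [Field F] [DecidableEq F] {M : F} {W : Affine F} {P : W.Point}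

namespace IsCongruentCurve

theorem isMontgomeryLadder (hW : IsCongruentCurve M W) (hP : ¬IsOfFinAddOrder P) :
    IsMontgomeryLadder M (xCoord P) (fun n ↦ (W.Φ n).eval (xCoord P))
      (fun n ↦ (W.ΨSq n).eval (xCoord P)) := by
  have hP₁ : P ≠ 0 := ne_zero_of_not_isOfFinAddOrder hP
  have smul_ne_zero {n : ℤ} (hn : 0 < n) : n • P ≠ 0 :=
    zsmul_ne_zero_of_not_isOfFinAddOrder hP hn.ne'
  have num {n : ℤ} (hn : 0 < n) :
      (W.Φ n).eval (xCoord P) = xCoord (n • P) * psiAt n P ^ 2 := by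
    rw [eval_Φ_eq_xCoord_zsmul_mul hP hn, eval_ΨSq hP₁]
  have den (n : ℤ) : (W.ΨSq n).eval (xCoord P) = psiAt n P ^ 2 := eval_ΨSq hP₁ n
  have hx {n : ℤ} (hn : 0 < n) : xCoord ((n + 1) • P) ≠ xCoord (n • P) :=
    xCoord_zsmul_ne hP (by lia) hn (by lia)
  have succ_add (n : ℤ) : (n + 1) • P + n • P = (2 * n + 1) • P := by
    rw [← add_smul, add_right_comm, ← two_mul]
  have succ_sub (n : ℤ) : (n + 1) • P - n • P = P := by
    rw [← sub_smul, add_sub_cancel_left, one_zsmul]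
  refine ⟨by simp, by simp, ?_, ?_, ?_, ?_, ?_⟩ <;> intro n hn <;> zify at hn <;> push_cast
  · have h := xCoord_two_zsmul (P := (n : ℤ) • P) (by rw [← mul_zsmul]; exact smul_ne_zero (by lia))
    rw [hW.b₄, hW.b₆, hW.b₈, ← mul_zsmul] at h
    rw [num (by lia), num hn, den, psiAt_two_mul_of_pos hP hn]
    linear_combination psiAt n P ^ 8 * h
  · have h := psiAt_two_sq (smul_ne_zero hn)
    rw [hW.b₂, hW.b₄, hW.b₆] at h
    rw [num hn, den, den, psiAt_two_mul_of_pos hP hn]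
    linear_combination psiAt n P ^ 8 * h
  · have h := xCoord_add_mul_xCoord_sub (smul_ne_zero (by lia)) (smul_ne_zero hn) (hx hn)
    rw [hW.b₄, hW.b₆, hW.b₈, succ_add, succ_sub] at h
    rw [num (by lia), num hn, num (by lia), den, den, psiAt_two_mul_add_one_of_pos hP hn]
    linear_combination psiAt n P ^ 4 * psiAt (n + 1) P ^ 4 * h
  · rw [num hn, num (by lia), den, den, den, psiAt_two_mul_add_one_of_pos hP hn]
    ring
  · have h := xCoord_add_add_xCoord_sub (smul_ne_zero (by lia)) (smul_ne_zero hn) (hx hn)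
    rw [hW.b₂, hW.b₄, hW.b₆, succ_add, succ_sub] at h
    rw [num (by lia), num hn, num (by lia), den, den, den, psiAt_two_mul_add_one_of_pos hP hn]
    linear_combination psiAt n P ^ 4 * psiAt (n + 1) P ^ 4 * h

theorem isSquare_xCoord_two_zsmul (hW : IsCongruentCurve M W) (hP : (2 : ℤ) • P ≠ 0) :
    IsSquare (xCoord ((2 : ℤ) • P)) := by
  have hψ := psiAt_two_ne_zero hP
  have hx := xCoord_two_zsmul hP
  rw [hW.b₄, hW.b₆, hW.b₈] at hx
  refine ⟨(xCoord P ^ 2 + M ^ 2) / psiAt 2 P, ?_⟩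
  field_simp
  linear_combination hx

theorem isSquare_xCoord_two_zsmul_sub (hW : IsCongruentCurve M W) (hP : (2 : ℤ) • P ≠ 0) :
    IsSquare (xCoord ((2 : ℤ) • P) - M) := by
  have hψ := psiAt_two_ne_zero hP
  have hx := xCoord_two_zsmul hP
  have hψ' := psiAt_two_sq (show P ≠ 0 by rintro rfl; simp at hP)
  rw [hW.b₄, hW.b₆, hW.b₈] at hx
  rw [hW.b₂, hW.b₄, hW.b₆] at hψ'
  refine ⟨(xCoord P ^ 2 - 2 * M * xCoord P - M ^ 2) / psiAt 2 P, ?_⟩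
  field_simp
  linear_combination hx - M * hψ'

end IsCongruentCurve

theorem four_dvd_of_isSquare {z n : ℤ} (hz : IsSquare z) (hsub : IsSquare (z - n))
    (hadd : IsSquare (z + n)) : 4 ∣ n := by
  have key : ∀ z n r s t : ZMod 4, z = r * r → z - n = s * s → z + n = t * t → n = 0 := by decide
  obtain ⟨⟨r, hr⟩, ⟨s, hs⟩, ⟨t, ht⟩⟩ := hz, hsub, hadd
  refine (ZMod.intCast_zmod_eq_zero_iff_dvd n 4).mp (key z n r s t ?_ ?_ ?_) <;> norm_cast <;>
    congr

theorem four_dvd_of_xCoord_two_zsmul_eq_intCast {N : ℕ} {P : (congruentCurve N).Point} {z : ℤ}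
    (hP : (2 : ℤ) • P ≠ 0) (hz : xCoord ((2 : ℤ) • P) = z) : 4 ∣ N := by
  have hW := isCongruentCurve_congruentCurve N
  have h₀ := hW.isSquare_xCoord_two_zsmul hP
  have hsub := hW.isSquare_xCoord_two_zsmul_sub hP
  have hadd := hW.neg.isSquare_xCoord_two_zsmul_sub hP
  rw [hz] at h₀ hsub hadd
  rw [sub_neg_eq_add] at hadd
  norm_cast at h₀ hsub hadd
  exact Int.natCast_dvd_natCast.mp (four_dvd_of_isSquare h₀ hsub hadd)

end CongruentCurvePoints

section Twist

variable {R : Type*} [CommRing R] {t : R} {W W' : WeierstrassCurve R}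

/-- The invariants of `W'` are those of the quadratic twist by `t` of `W`; when `a₁ = a₃ = 0` the
twist is `ty² = x³ + ⋯`, made monic in `tx` and `t²y`. -/
structure IsTwist (t : R) (W W' : WeierstrassCurve R) : Prop where
  b₂ : W'.b₂ = t * W.b₂
  b₄ : W'.b₄ = t ^ 2 * W.b₄
  b₆ : W'.b₆ = t ^ 3 * W.b₆
  b₈ : W'.b₈ = t ^ 4 * W.b₈

theorem IsCongruentCurve.isTwist {M : R} (hW : IsCongruentCurve M W)
    (hW' : IsCongruentCurve (t * M) W') : IsTwist t W W' where
  b₂ := by rw [hW.b₂, hW'.b₂, mul_zero]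
  b₄ := by rw [hW.b₄, hW'.b₄]; ring
  b₆ := by rw [hW.b₆, hW'.b₆, mul_zero]
  b₈ := by rw [hW.b₈, hW'.b₈]; ring

theorem isTwist_congruentCurveZ_mul (t M : ℕ) :
    IsTwist (t : ℤ) (congruentCurveZ M) (congruentCurveZ (t * M)) :=
  (isCongruentCurve_congruentCurveZ M).isTwist <| by
    simpa only [Nat.cast_mul] using isCongruentCurve_congruentCurveZ (t * M)

theorem eval_preΨ'_eq_preNormEDS' (W : WeierstrassCurve R) (x : R) (n : ℕ) :
    (W.preΨ' n).eval x =
      preNormEDS' (W.Ψ₂Sq.eval x ^ 2) (W.Ψ₃.eval x) (W.preΨ₄.eval x) n := by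
  rw [preΨ', ← coe_evalRingHom, map_preNormEDS', map_pow]

namespace IsTwist

variable (h : IsTwist t W W') (x : R)

include h

theorem eval_Ψ₂Sq : W'.Ψ₂Sq.eval (t * x) = t ^ 3 * W.Ψ₂Sq.eval x := by
  simp only [Ψ₂Sq, eval_add, eval_mul, eval_pow, eval_C, eval_X, h.b₂, h.b₄, h.b₆]
  ring

theorem eval_preΨ' (n : ℕ) :
    (W'.preΨ' n).eval (t * x) = (t ^ 2) ^ preNormEDSWeight n * (W.preΨ' n).eval x := by
  rw [eval_preΨ'_eq_preNormEDS', eval_preΨ'_eq_preNormEDS', ← preNormEDS'_weighted_mul]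
  congr 1
  · rw [h.eval_Ψ₂Sq]
    ring
  · simp only [Ψ₃, eval_add, eval_mul, eval_pow, eval_C, eval_X, eval_ofNat, h.b₂, h.b₄, h.b₆, h.b₈]
    ring
  · simp only [preΨ₄, eval_add, eval_mul, eval_pow, eval_C, eval_X, eval_ofNat, h.b₂, h.b₄, h.b₆,
      h.b₈]
    ring

theorem mul_eval_ΨSq (n : ℕ) :
    t * (W'.ΨSq n).eval (t * x) = t ^ n ^ 2 * (W.ΨSq n).eval x := by
  obtain ⟨k, rfl | rfl⟩ := n.even_or_odd'
  · obtain _ | k := k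
    · simp
    simp only [ΨSq_ofNat, even_two_mul, if_true, eval_mul, eval_pow, h.eval_preΨ' x, h.eval_Ψ₂Sq x,
      preNormEDSWeight_two_mul_succ]
    ring
  · simp only [ΨSq_ofNat, Nat.not_even_two_mul_add_one, if_false, mul_one, eval_pow,
      h.eval_preΨ' x, preNormEDSWeight_two_mul_add_one]
    ring

theorem eval_Φ (n : ℕ) : (W'.Φ n).eval (t * x) = t ^ n ^ 2 * (W.Φ n).eval x := by
  obtain _ | n := n
  · simp
  rw [Nat.cast_succ, Φ_ofNat, Φ_ofNat]
  simp only [eval_sub, eval_mul, eval_pow, eval_X, h.eval_preΨ' x]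
  obtain ⟨k, rfl | rfl⟩ := n.even_or_odd'
  · simp only [even_two_mul, if_true, eval_one, h.eval_Ψ₂Sq x, preNormEDSWeight_two_mul_add_one,
      show 2 * k + 2 = 2 * (k + 1) from rfl, preNormEDSWeight_two_mul_succ]
    obtain _ | k := k
    · simp
    rw [preNormEDSWeight_two_mul_succ]
    ring
  · simp only [Nat.not_even_two_mul_add_one, if_false, eval_one, h.eval_Ψ₂Sq x,
      show 2 * k + 1 + 1 = 2 * (k + 1) from rfl, preNormEDSWeight_two_mul_succ,
      show 2 * k + 1 + 2 = 2 * (k + 1) + 1 from rfl, preNormEDSWeight_two_mul_add_one]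
    ring

end IsTwist

end Twist

section IntegralModel

variable {N : ℕ} {a : ℤ} {P : (congruentCurve N).Point}

theorem eval_Φ_congruentCurve (N : ℕ) (n a : ℤ) :
    ((congruentCurve N).Φ n).eval (a : ℚ) = ((congruentCurveZ N).Φ n).eval a := by
  rw [← map_congruentCurveZ, map_Φ, eval_intCast_map, eq_intCast,
    Int.cast_id]

theorem eval_ΨSq_congruentCurve (N : ℕ) (n a : ℤ) :
    ((congruentCurve N).ΨSq n).eval (a : ℚ) = ((congruentCurveZ N).ΨSq n).eval a := by
  rw [← map_congruentCurveZ, map_ΨSq, eval_intCast_map, eq_intCast,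
    Int.cast_id]

theorem isMontgomeryLadder_congruentCurveZ (hP : ¬IsOfFinAddOrder P) (ha : xCoord P = a) :
    IsMontgomeryLadder (N : ℤ) a (fun n ↦ ((congruentCurveZ N).Φ n).eval a)
      (fun n ↦ ((congruentCurveZ N).ΨSq n).eval a) := by
  have L := (isCongruentCurve_congruentCurve N).isMontgomeryLadder hP
  simp only [ha, eval_Φ_congruentCurve, eval_ΨSq_congruentCurve] at L
  exact .of_map (f := Int.castRingHom ℚ) Int.cast_injective (by simpa using L)

theorem eval_Φ_congruentCurveZ_eq_mul (hP : ¬IsOfFinAddOrder P) (ha : xCoord P = a) {n : ℤ}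
    (hn : 0 < n) {z : ℤ} (hz : xCoord (n • P) = z) :
    ((congruentCurveZ N).Φ n).eval a = z * ((congruentCurveZ N).ΨSq n).eval a := by
  have h := eval_Φ_eq_xCoord_zsmul_mul hP hn
  rw [ha, hz, eval_Φ_congruentCurve, eval_ΨSq_congruentCurve] at h
  exact_mod_cast h

theorem psiEN_of_odd (N : ℕ) (a b : ℤ) {n : ℕ} (hn : Odd n) :
    psiEN N a b n = ((congruentCurveZ N).preΨ' n).eval a := by
  rw [psiEN, Ψ_ofNat, if_neg (Nat.not_even_iff_odd.mpr hn), mul_one, evalEval_C]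

end IntegralModel

section PrimeFactors

variable {W : WeierstrassCurve ℤ} {M a t z : ℤ} {n : ℕ}

theorem not_dvd_eval_preΨ' (hcop : IsCoprime a M) (ht : Squarefree t) (hn : Odd n)
    (L : IsMontgomeryLadder M a (fun n ↦ (W.Φ n).eval a) (fun n ↦ (W.ΨSq n).eval a))
    (hz : t * (W.Φ n).eval a = z * (W.ΨSq n).eval a) {p : ℕ} (hp : p.Prime) (hp₂ : p ≠ 2) :
    ¬(p : ℤ) ∣ (W.preΨ' n).eval a := by
  intro hdvd
  have : Fact p.Prime := ⟨hp⟩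
  have hΨSq : (W.ΨSq n).eval a = (W.preΨ' n).eval a ^ 2 := by
    rw [ΨSq_ofNat, if_neg (Nat.not_even_iff_odd.mpr hn), mul_one, eval_pow]
  have hΨ : (((W.ΨSq n).eval a : ℤ) : ZMod p) = 0 := by
    rw [ZMod.intCast_zmod_eq_zero_iff_dvd, hΨSq]
    exact dvd_pow hdvd two_ne_zero
  have hΦ : (((W.Φ n).eval a : ℤ) : ZMod p) = 0 := by
    rw [ZMod.intCast_zmod_eq_zero_iff_dvd]
    have hsq : (p : ℤ) * p ∣ t * (W.Φ n).eval a := by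
      rw [hz, hΨSq, sq]
      exact (mul_dvd_mul hdvd hdvd).mul_left z
    exact ht.dvd_of_squarefree_of_mul_dvd_mul_right hsq
  have h2 : (2 : ZMod p) ≠ 0 := Ring.two_ne_zero (by rwa [ZMod.ringChar_zmod_n])
  have haM : (a : ZMod p) ≠ 0 ∨ (M : ZMod p) ≠ 0 := by
    simpa using (hcop.map (Int.castRingHom (ZMod p))).ne_zero_or_ne_zero
  have h := (L.map (Int.castRingHom (ZMod p))).num_ne_zero_or_mul_den_ne_zero h2 haM hn.pos
  simp only [eq_intCast, hΦ, hΨ, mul_zero, ne_eq, not_true_eq_false, or_self] at h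

theorem isUnit_of_forall_odd_prime_not_dvd {w : ℤ} (hw : Odd w)
    (h : ∀ p : ℕ, p.Prime → p ≠ 2 → ¬(p : ℤ) ∣ w) : IsUnit w := by
  rw [Int.isUnit_iff_natAbs_eq, Nat.eq_one_iff_not_exists_prime_dvd]
  refine fun p hp hpw ↦ h p hp ?_ (Int.natCast_dvd.mpr hpw)
  rintro rfl
  exact Int.not_even_iff_odd.mpr hw (even_iff_two_dvd.mpr (Int.natCast_dvd.mpr hpw))

namespace IsCongruentCurve

section Eval

variable {R : Type*} [CommRing R] {M : R} {W : WeierstrassCurve R} (hW : IsCongruentCurve M W)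

include hW

theorem eval_Ψ₂Sq (x : R) : W.Ψ₂Sq.eval x = 4 * x * (x ^ 2 - M ^ 2) := by
  simp only [Ψ₂Sq, eval_add, eval_mul, eval_pow, eval_C, eval_X, hW.b₂, hW.b₄, hW.b₆]
  ring

theorem eval_Ψ₃ (x : R) : W.Ψ₃.eval x = 3 * x ^ 4 - 6 * M ^ 2 * x ^ 2 - M ^ 4 := by
  simp only [Ψ₃, eval_add, eval_mul, eval_pow, eval_C, eval_X, eval_ofNat, hW.b₂, hW.b₄, hW.b₆,
    hW.b₈]
  ring

theorem eval_preΨ₄ (x : R) :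
    W.preΨ₄.eval x = 2 * (x ^ 6 - 5 * M ^ 2 * x ^ 4 - 5 * M ^ 4 * x ^ 2 + M ^ 6) := by
  simp only [preΨ₄, eval_add, eval_mul, eval_pow, eval_C, eval_X, eval_ofNat, hW.b₂, hW.b₄, hW.b₆,
    hW.b₈]
  ring

end Eval

theorem odd_eval_preΨ' (hW : IsCongruentCurve M W) (haM : Odd (a + M)) (hn : Odd n) :
    Odd ((W.preΨ' n).eval a) := by
  rw [eval_preΨ'_eq_preNormEDS', hW.eval_Ψ₂Sq, hW.eval_Ψ₃]
  refine odd_preNormEDS' _ ?_ ?_ hn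
  · simp only [mul_assoc, Int.even_mul, Int.even_pow]
    exact ⟨.inl (by decide), two_ne_zero⟩
  · obtain ⟨k, hk⟩ : Odd ((a + M) ^ 4) := haM.pow
    exact ⟨k + a ^ 4 - M ^ 4 - 2 * a ^ 3 * M - 6 * a ^ 2 * M ^ 2 - 2 * a * M ^ 3,
      by linear_combination hk⟩

theorem exists_odd_two_pow_mul_eq_eval_preΨ' (hW : IsCongruentCurve M W) (ha : Odd a) (hM : Odd M)
    (hn : Odd n) : ∃ w, Odd w ∧ 2 ^ preNormEDSWeight n * w = (W.preΨ' n).eval a := by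
  obtain ⟨c, hc⟩ := Int.eight_dvd_sq_sub_one_of_odd ha
  obtain ⟨d, hd⟩ := Int.eight_dvd_sq_sub_one_of_odd hM
  refine ⟨preNormEDS' (2 * (8 * a * (c - d)) ^ 2)
    (48 * c ^ 2 - 96 * c * d - 16 * d ^ 2 - 16 * d - 1)
    (2 * (4 * c + 4 * d + 1) *
      (16 * c ^ 2 - 96 * c * d + 16 * d ^ 2 - 8 * c - 8 * d - 1)) n,
    odd_preNormEDS' _ (even_two_mul _) ?_ hn, ?_⟩
  · exact ⟨24 * c ^ 2 - 48 * c * d - 8 * d ^ 2 - 8 * d - 1, by ring⟩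
  · rw [sub_eq_iff_eq_add] at hc hd
    have pow_four (y : ℤ) : y ^ 4 = (y ^ 2) ^ 2 := by ring
    have pow_six (y : ℤ) : y ^ 6 = (y ^ 2) ^ 3 := by ring
    rw [eval_preΨ'_eq_preNormEDS', ← preNormEDS'_weighted_mul, hW.eval_Ψ₂Sq, hW.eval_Ψ₃,
      hW.eval_preΨ₄, pow_four, pow_four, pow_six, pow_six, hc, hd]
    ring_nf

theorem exists_odd_two_pow_mul_eq_eval_preΨ'_of_isCoprime (hW : IsCongruentCurve M W)
    (hcop : IsCoprime a M) (hn : Odd n) :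
    ∃ j ≤ preNormEDSWeight n, ∃ w, Odd w ∧ 2 ^ j * w = (W.preΨ' n).eval a := by
  rcases Int.even_or_odd (a + M) with heven | hodd
  · have ha : Odd a := by
      by_contra! ha
      rw [Int.not_odd_iff_even] at ha
      have hM : Even M := (Int.even_add.mp heven).mp ha
      exact absurd (hcop.isUnit_of_dvd' ha.two_dvd hM.two_dvd) (by decide)
    have hM : Odd M := by
      rwa [Int.even_add', iff_true_left ha] at heven
    exact ⟨_, le_rfl, hW.exists_odd_two_pow_mul_eq_eval_preΨ' ha hM hn⟩
  · exact ⟨0, Nat.zero_le _, _, hW.odd_eval_preΨ' hodd hn, by rw [pow_zero, one_mul]⟩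

theorem abs_eval_preΨ'_le (hW : IsCongruentCurve M W) (hcop : IsCoprime a M) (hn : Odd n)
    (h : ∀ p : ℕ, p.Prime → p ≠ 2 → ¬(p : ℤ) ∣ (W.preΨ' n).eval a) :
    |(W.preΨ' n).eval a| ≤ 2 ^ preNormEDSWeight n := by
  obtain ⟨j, hj, w, hw, hu⟩ := hW.exists_odd_two_pow_mul_eq_eval_preΨ'_of_isCoprime hcop hn
  have hw₁ : |w| = 1 := by
    rw [← Int.isUnit_iff_abs_eq]
    refine isUnit_of_forall_odd_prime_not_dvd hw fun p hp hp₂ hpw ↦ h p hp hp₂ ?_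
    rw [← hu]
    exact hpw.mul_left _
  rw [← hu, abs_mul, hw₁, mul_one, abs_of_pos (by positivity)]
  gcongr
  norm_num

end IsCongruentCurve

end PrimeFactors

section Bound

variable {a b z : ℤ} {n : ℕ}

theorem psiEN_mul {t M : ℕ} (hn : Odd n) :
    psiEN (t * M) (t * a) b n =
      (t ^ 2) ^ preNormEDSWeight n * ((congruentCurveZ M).preΨ' n).eval a := by
  rw [psiEN_of_odd _ _ _ hn, (isTwist_congruentCurveZ_mul t M).eval_preΨ']

theorem not_dvd_eval_preΨ'_of_isCoprime {t M : ℕ} {P : (congruentCurve (t * M)).Point}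
    (ht : Squarefree t) (hcop : IsCoprime a M) (hP : ¬IsOfFinAddOrder P)
    (ha : xCoord P = (t * a : ℤ)) (hn : Odd n) (hz : xCoord ((n : ℤ) • P) = z) {p : ℕ}
    (hp : p.Prime) (hp₂ : p ≠ 2) : ¬(p : ℤ) ∣ ((congruentCurveZ M).preΨ' n).eval a := by
  have hT := isTwist_congruentCurveZ_mul t M
  have ht₀ : (t : ℤ) ≠ 0 := Nat.cast_ne_zero.mpr ht.ne_zero
  have L := isMontgomeryLadder_congruentCurveZ hP ha
  rw [Nat.cast_mul] at L
  refine not_dvd_eval_preΨ' hcop (Int.squarefree_natCast.mpr ht) hn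
    (L.of_twist ht₀ (hT.eval_Φ a) (hT.mul_eval_ΨSq a)) (z := z) ?_ hp hp₂
  have hΦ := eval_Φ_congruentCurveZ_eq_mul hP ha (by exact_mod_cast hn.pos) hz
  refine mul_left_cancel₀ (pow_ne_zero (n ^ 2) ht₀) ?_
  linear_combination t * hΦ - t * hT.eval_Φ a n + z * hT.mul_eval_ΨSq a n

theorem abs_psiEN_le {N : ℕ} (hsq : Squarefree N) {P : (congruentCurve N).Point}
    (hP : ¬IsOfFinAddOrder P) (ha : xCoord P = a) (hn : Odd n)
    (hz : xCoord ((n : ℤ) • P) = z) : |psiEN N a b n| ≤ (2 * N) ^ (2 * preNormEDSWeight n) := by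
  have hgcd : 0 < Int.gcd a N := Int.gcd_pos_of_ne_zero_right _ (mod_cast hsq.ne_zero)
  obtain ⟨t, a, M, ht, hcop, rfl, hM⟩ := Int.exists_gcd_one' hgcd
  lift M to ℕ using by
    exact nonneg_of_mul_nonneg_left (hM ▸ Nat.cast_nonneg N) (Nat.cast_pos.mpr ht)
  obtain rfl : N = t * M := by zify; rw [hM, mul_comm]
  rw [mul_comm a] at ha ⊢
  rw [← Int.isCoprime_iff_gcd_eq_one] at hcop
  have hM₁ : 1 ≤ M := Nat.one_le_iff_ne_zero.mpr (right_ne_zero_of_mul hsq.ne_zero)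
  have hu := (isCongruentCurve_congruentCurveZ M).abs_eval_preΨ'_le hcop hn fun p ↦
    not_dvd_eval_preΨ'_of_isCoprime hsq.of_mul_left hcop hP ha hn hz
  calc |psiEN (t * M) (t * a) b n|
      = (t ^ 2) ^ preNormEDSWeight n * |((congruentCurveZ M).preΨ' n).eval a| := by
        rw [psiEN_mul hn, abs_mul, abs_of_nonneg (by positivity)]
    _ ≤ (t ^ 2) ^ preNormEDSWeight n * 2 ^ preNormEDSWeight n := by gcongr
    _ ≤ ((t * M) ^ 2) ^ preNormEDSWeight n * (2 ^ 2) ^ preNormEDSWeight n := by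
        gcongr
        · exact_mod_cast Nat.le_mul_of_pos_right t hM₁
        · norm_num
    _ = (2 * (t * M : ℕ)) ^ (2 * preNormEDSWeight n) := by
        rw [← mul_pow, ← mul_pow, ← pow_mul, mul_comm, Nat.cast_mul]

end Bound

theorem IsIntegralPoint.exists_xCoord_eq_intCast {W : Affine ℚ} {P : W.Point}
    (h : IsIntegralPoint P) : ∃ z : ℤ, xCoord P = z := by
  obtain ⟨x, y, h, rfl, hden⟩ := h
  exact ⟨x.num, ((Rat.den_eq_one_iff x).mp hden).symm⟩

end

theorem stmt4 (N : ℕ) (hN : 0 < N) (hsq : Squarefree N)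
    (a b : ℤ) (h : (congruentCurve N).Nonsingular (a : ℚ) (b : ℚ))
    (hPtors : ∀ m : ℤ, 1 ≤ m →
      m • (WeierstrassCurve.Affine.Point.some _ _ h) ≠ 0)
    (n : ℤ) (hn : 1 ≤ n)
    (hint : IsIntegralPoint (n • (WeierstrassCurve.Affine.Point.some _ _ h))) :
    |(psiEN N a b n : ℝ)| ≤ (2 * (N : ℝ)) ^ ((((n : ℝ)) ^ 2 - 1) / 2) := by
  lift n to ℕ using by lia
  obtain ⟨z, hz⟩ := hint.exists_xCoord_eq_intCast
  obtain ⟨m, rfl⟩ | hodd := n.even_or_odd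
  · have hnP := hPtors _ hn
    rw [← two_mul, Nat.cast_mul, mul_zsmul] at hz hnP
    have h4 : 2 * 2 ∣ N := four_dvd_of_xCoord_two_zsmul_eq_intCast hnP hz
    exact absurd (hsq 2 h4) (by decide)
  · have hP : ¬IsOfFinAddOrder (WeierstrassCurve.Affine.Point.some _ _ h) := by
      rw [isOfFinAddOrder_iff_nsmul_eq_zero]
      rintro ⟨m, hm, hmP⟩
      exact hPtors m (mod_cast hm) (by rwa [natCast_zsmul])
    have hbound := abs_psiEN_le (b := b) hsq hP rfl hodd hz
    rw [Int.cast_natCast, ← natCast_two_mul_preNormEDSWeight ℝ hodd, Real.rpow_natCast]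
    exact_mod_cast hbound
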